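/- arXiv:0911.2614 — 6 statements merged into one kernel-verified Lean document; each statement's English description precedes it below -/
import Mathlib

section
/- For every θ ∈ (−π/2, π/2), the 2×2 matrix I + A(θ) is invertible and the squared Euclidean operator norm of its inverse satisfies |(I + A(θ))^{-1}|² = 2/(1 + cos θ) ≤ 1 + θ² ≤ exp(θ²). -/
/-!
Since `(1 + A(θ)) (1 + A(θ))ᵀ = ((1 + cos θ) / 2) • 1`, the matrix `1 + A(θ)` is a nonzero multiple
of a rotation: its inverse is `(2 / (1 + cos θ)) • (1 + A(θ))ᵀ`, and the C⋆-identity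
`‖T‖ ^ 2 = ‖T⋆ T‖` gives the norm of the inverse. The bound on `2 / (1 + cos θ)` follows from
`1 - θ ^ 2 / 2 ≤ cos θ` as soon as `θ ^ 2 ≤ 3`, which holds because `(π / 2) ^ 2 < 3`.
-/

/-- The matrix `A(θ) = ½(R_θ − I)` of the paper. -/
noncomputable def Amat (θ : ℝ) : Matrix (Fin 2) (Fin 2) ℝ :=
  (1/2 : ℝ) • !![Real.cos θ - 1, -Real.sin θ; Real.sin θ, Real.cos θ - 1]

lemma one_add_Amat_mul_transpose (θ : ℝ) :
    (1 + Amat θ) * (1 + Amat θ).transpose = ((1 + Real.cos θ) / 2) • 1 := by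
  have h := Real.sin_sq_add_cos_sq θ
  ext i j
  fin_cases i <;> fin_cases j <;>
    simp [Amat, Matrix.mul_apply, Fin.sum_univ_two] <;> linarith

/-- The C⋆-identity computes the Euclidean operator norm of a multiple of an orthogonal matrix. -/
lemma norm_sq_toEuclideanCLM_of_transpose_mul_self {N : Matrix (Fin 2) (Fin 2) ℝ} {k : ℝ}
    (hk : 0 ≤ k) (h : N.transpose * N = k • 1) :
    ‖Matrix.toEuclideanCLM (n := Fin 2) (𝕜 := ℝ) N‖ ^ 2 = k := by
  have hN : star N * N = k • 1 := by
    rw [Matrix.star_eq_conjTranspose, Matrix.conjTranspose_eq_transpose_of_trivial, h]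
  rw [sq, ← CStarRing.norm_star_mul_self, ← map_star, ← map_mul, hN, map_smul, map_one, norm_smul,
    norm_one, mul_one, Real.norm_of_nonneg hk]

lemma two_div_one_add_cos_le {θ : ℝ} (hc : 0 < 1 + Real.cos θ) (h3 : θ ^ 2 ≤ 3) :
    2 / (1 + Real.cos θ) ≤ 1 + θ ^ 2 := by
  have h := Real.one_sub_sq_div_two_le_cos (x := θ)
  rw [div_le_iff₀ hc]
  nlinarith [mul_nonneg (sq_nonneg θ) (sub_nonneg.2 h3),
    mul_nonneg (add_nonneg zero_le_one (sq_nonneg θ)) (sub_nonneg.2 h)]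

/-- For every θ ∈ (−π/2, π/2), the matrix `I + A(θ)` is invertible and the squared
Euclidean operator norm of its inverse satisfies
`|(I + A(θ))⁻¹|² = 2/(1 + cos θ) ≤ 1 + θ² ≤ exp(θ²)`. -/
theorem stmt2 (θ : ℝ) (hθ : θ ∈ Set.Ioo (-(Real.pi/2)) (Real.pi/2)) :
    IsUnit (1 + Amat θ) ∧
    ‖Matrix.toEuclideanCLM (n := Fin 2) (𝕜 := ℝ) ((1 + Amat θ)⁻¹)‖ ^ 2
        = 2 / (1 + Real.cos θ) ∧
    2 / (1 + Real.cos θ) ≤ 1 + θ ^ 2 ∧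
    1 + θ ^ 2 ≤ Real.exp (θ ^ 2) := by
  have hc : 0 < 1 + Real.cos θ := by linarith [Real.cos_pos_of_mem_Ioo hθ]
  have h3 : θ ^ 2 ≤ 3 := by
    have hpi := Real.pi_lt_d2
    nlinarith [hθ.1, hθ.2]
  have hright : (1 + Amat θ) * ((2 / (1 + Real.cos θ)) • (1 + Amat θ).transpose) = 1 := by
    rw [Matrix.mul_smul, one_add_Amat_mul_transpose, smul_smul, div_mul_div_cancel₀ hc.ne',
      div_self two_ne_zero, one_smul]
  refine ⟨(Matrix.isUnit_iff_isUnit_det _).2 (Matrix.isUnit_det_of_right_inverse hright), ?_,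
    two_div_one_add_cos_le hc h3, ?_⟩
  · apply norm_sq_toEuclideanCLM_of_transpose_mul_self (by positivity)
    rw [Matrix.inv_eq_right_inv hright, Matrix.transpose_smul, Matrix.transpose_transpose,
      Matrix.smul_mul, Matrix.mul_smul, one_add_Amat_mul_transpose, smul_smul, smul_smul]
    congr 1
    field_simp
  · linarith [Real.add_one_le_exp (θ ^ 2)]
end

section
/- Let ν ∈ (0, 1) and let b : (0, π/2] → (0, ∞) be a C^∞ function with c θ^{−1−ν} ≤ b(θ) ≤ C θ^{−1−ν} on (0, π/2] for some 0 < c < C, and such that for every k ≥ 1 there is a constant C_k with |b^{(k)}(θ)| ≤ C_k θ^{−1−ν−k} for all θ ∈ (0, π/2]. Define G(x) = ∫_x^{π/2} b(θ) dθ and let ϑ : [0, ∞) → (0, π/2] be the inverse of G. Then ϑ is C^∞ on (0, ∞) and for every k ≥ 1 there is a constant C′_k (depending on ν and the constants above) such that |ϑ^{(k)}(z)| ≤ C′_k (1 + z)^{−1/ν − 1} for all z > 0. -/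
/-! The derivatives of `ϑ` are symbols composed with `ϑ`. On `(0, π/2)` call `f` a symbol of order
`m` if `|f^{(j)}(θ)| ≲ θ^{m-j}` for all `j`. Symbols are closed under sums and products (orders
add), and the reciprocal of a symbol of order `m` bounded below by `c θ^m` is a symbol of order
`-m`. Hence `F = -1/b` is a symbol of order `1 + ν`.

The lower bound on `b` makes `ϑ` Lipschitz, so the one-dimensional inverse function theorem gives
`ϑ' = F ∘ ϑ` on `(0, ∞)`. If `f` is a symbol of order `m`, then `(f ∘ ϑ)' = (f' F) ∘ ϑ` and `f' F`
is a symbol of order `m + ν ≥ m`; since `ϑ` is bounded, it follows by induction that every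
`ϑ^{(k)}`, `k ≥ 1`, is `O(ϑ^{1+ν})`. Finally, integrating the upper bound on `b` gives
`1 + z ≲ ϑ(z)^{-ν}`, that is `ϑ(z)^{1+ν} ≲ (1+z)^{-1/ν-1}`. -/

/-- `IsSymbol n m f`: on `(0, π/2)` the function `f` has `n` successive derivatives and the `j`-th
one is `O(θ^{m-j})` for all `j ≤ n`. The definition is recursive, with the derivative given by an
existential witness, so that it can be transported along explicit derivative formulas. -/
def IsSymbol : ℕ → ℝ → (ℝ → ℝ) → Prop
  | 0, m, f => ∃ K : ℝ, 0 ≤ K ∧ ∀ θ ∈ Set.Ioo (0:ℝ) (Real.pi/2), |f θ| ≤ K * θ ^ m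
  | n+1, m, f => (∃ K : ℝ, 0 ≤ K ∧ ∀ θ ∈ Set.Ioo (0:ℝ) (Real.pi/2), |f θ| ≤ K * θ ^ m) ∧
      ∃ g : ℝ → ℝ, (∀ θ ∈ Set.Ioo (0:ℝ) (Real.pi/2), HasDerivAt f (g θ) θ) ∧ IsSymbol n (m-1) g

namespace IsSymbol

lemma bound {n : ℕ} {m : ℝ} {f : ℝ → ℝ} (h : IsSymbol n m f) :
    ∃ K : ℝ, 0 ≤ K ∧ ∀ θ ∈ Set.Ioo (0:ℝ) (Real.pi/2), |f θ| ≤ K * θ ^ m := by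
  cases n with
  | zero => exact h
  | succ n => exact h.1

lemma pred {n : ℕ} {m : ℝ} {f : ℝ → ℝ} (h : IsSymbol (n+1) m f) : IsSymbol n m f := by
  induction n generalizing m f with
  | zero => exact h.1
  | succ n ih =>
    obtain ⟨h0, g, hg, hs⟩ := h
    exact ⟨h0, g, hg, ih hs⟩

lemma add {n : ℕ} {m : ℝ} {f g : ℝ → ℝ} (hf : IsSymbol n m f) (hg : IsSymbol n m g) :
    IsSymbol n m (fun x => f x + g x) := by
  have key : ∃ K : ℝ, 0 ≤ K ∧ ∀ θ ∈ Set.Ioo (0:ℝ) (Real.pi/2), |f θ + g θ| ≤ K * θ ^ m := by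
    obtain ⟨K, hK, h1⟩ := hf.bound
    obtain ⟨L, hL, h2⟩ := hg.bound
    refine ⟨K + L, by positivity, fun θ hθ => ?_⟩
    have := abs_add_le (f θ) (g θ)
    linarith [h1 θ hθ, h2 θ hθ]
  induction n generalizing m f g with
  | zero => exact key
  | succ n ih =>
    obtain ⟨-, f', hf', hsf⟩ := hf
    obtain ⟨-, g', hg', hsg⟩ := hg
    refine ⟨key, fun x => f' x + g' x, fun θ hθ => (hf' θ hθ).add (hg' θ hθ), ih hsf hsg ?_⟩
    obtain ⟨K, hK, h1⟩ := hsf.bound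
    obtain ⟨L, hL, h2⟩ := hsg.bound
    refine ⟨K + L, by positivity, fun θ hθ => ?_⟩
    have := abs_add_le (f' θ) (g' θ)
    linarith [h1 θ hθ, h2 θ hθ]

lemma neg {n : ℕ} {m : ℝ} {f : ℝ → ℝ} (hf : IsSymbol n m f) :
    IsSymbol n m (fun x => -f x) := by
  induction n generalizing m f with
  | zero =>
    obtain ⟨K, hK, h1⟩ := hf
    exact ⟨K, hK, fun θ hθ => by simpa using h1 θ hθ⟩
  | succ n ih =>
    obtain ⟨⟨K, hK, h1⟩, f', hf', hsf⟩ := hf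
    exact ⟨⟨K, hK, fun θ hθ => by simpa using h1 θ hθ⟩, fun x => -f' x,
      fun θ hθ => (hf' θ hθ).neg, ih hsf⟩

lemma mul {n : ℕ} {m p q : ℝ} {f g : ℝ → ℝ} (hf : IsSymbol n m f) (hg : IsSymbol n p g)
    (hq : q = m + p) : IsSymbol n q (fun x => f x * g x) := by
  induction n generalizing m p q f g with
  | zero =>
    obtain ⟨K, hK, h1⟩ := hf
    obtain ⟨L, hL, h2⟩ := hg
    refine ⟨K * L, by positivity, fun θ hθ => ?_⟩
    rw [abs_mul, hq, Real.rpow_add hθ.1]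
    calc |f θ| * |g θ| ≤ (K * θ ^ m) * (L * θ ^ p) :=
          mul_le_mul (h1 θ hθ) (h2 θ hθ) (abs_nonneg _) (le_trans (abs_nonneg _) (h1 θ hθ))
      _ = _ := by ring
  | succ n ih =>
    have hf0 := hf.pred
    have hg0 := hg.pred
    refine ⟨(ih hf0 hg0 hq).bound, ?_⟩
    obtain ⟨-, f', hf', hsf⟩ := hf
    obtain ⟨-, g', hg', hsg⟩ := hg
    exact ⟨fun x => f' x * g x + f x * g' x, fun θ hθ => (hf' θ hθ).mul (hg' θ hθ),
      (ih hsf hg0 (by rw [hq]; ring)).add (ih hf0 hsg (by rw [hq]; ring))⟩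

/-- Reciprocals of elliptic symbols: the induction uses `(1/f)' = -f' (1/f) (1/f)`. -/
lemma inv {n : ℕ} {m c : ℝ} {f : ℝ → ℝ} (hf : IsSymbol n m f) (hc : 0 < c)
    (hlow : ∀ θ ∈ Set.Ioo (0:ℝ) (Real.pi/2), c * θ ^ m ≤ f θ) :
    IsSymbol n (-m) (fun x => (f x)⁻¹) := by
  have hpos : ∀ θ ∈ Set.Ioo (0:ℝ) (Real.pi/2), 0 < f θ := fun θ hθ =>
    lt_of_lt_of_le (mul_pos hc (Real.rpow_pos_of_pos hθ.1 _)) (hlow θ hθ)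
  have key : ∃ K : ℝ, 0 ≤ K ∧
      ∀ θ ∈ Set.Ioo (0:ℝ) (Real.pi/2), |(f θ)⁻¹| ≤ K * θ ^ (-m) := by
    refine ⟨c⁻¹, by positivity, fun θ hθ => ?_⟩
    rw [abs_of_pos (inv_pos.2 (hpos θ hθ)), Real.rpow_neg hθ.1.le, ← mul_inv]
    exact inv_anti₀ (mul_pos hc (Real.rpow_pos_of_pos hθ.1 _)) (hlow θ hθ)
  induction n with
  | zero => exact key
  | succ n ih =>
    have hi := ih hf.pred
    obtain ⟨-, f', hf', hsf⟩ := hf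
    refine ⟨key, fun x => -(f' x * ((f x)⁻¹ * (f x)⁻¹)), fun θ hθ => ?_,
      (hsf.mul (hi.mul hi rfl) (by ring)).neg⟩
    exact ((hf' θ hθ).inv (hpos θ hθ).ne').congr_deriv (by ring)

/-- If `ϑ' = F ∘ ϑ` on `(0, ∞)` with `F` a symbol of order `1 + ν`, then differentiating `f ∘ ϑ`
replaces the symbol `f` by `f' F`, so that the order increases by `ν` at each step. -/
lemma comp {n : ℕ} {m ν : ℝ} {f F ϑ : ℝ → ℝ} (hF : ∀ n, IsSymbol n (1 + ν) F)
    (hmem : ∀ z, 0 < z → ϑ z ∈ Set.Ioo 0 (Real.pi/2))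
    (hder : ∀ z, 0 < z → HasDerivAt ϑ (F (ϑ z)) z)
    (hf : IsSymbol (n+1) m f) :
    ContDiffOn ℝ n (fun z => f (ϑ z)) (Set.Ioi 0) ∧
      ∃ K : ℝ, 0 ≤ K ∧ ∀ z : ℝ, 0 < z →
        |iteratedDerivWithin n (fun z => f (ϑ z)) (Set.Ioi 0) z| ≤ K * ϑ z ^ (m + n * ν) := by
  induction n generalizing m f with
  | zero =>
    constructor
    · obtain ⟨-, f', hf', hsf⟩ := hf
      rw [Nat.cast_zero, contDiffOn_zero]
      intro z hz
      exact ((hf' _ (hmem z hz)).comp z (hder z hz)).continuousAt.continuousWithinAt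
    · obtain ⟨K, hK, h⟩ := hf.bound
      refine ⟨K, hK, fun z hz => ?_⟩
      simpa using h _ (hmem z hz)
  | succ n ih =>
    obtain ⟨-, f', hf', hsf⟩ := hf
    have hd : ∀ z, 0 < z → HasDerivAt (fun z => f (ϑ z)) (f' (ϑ z) * F (ϑ z)) z :=
      fun z hz => (hf' _ (hmem z hz)).comp z (hder z hz)
    have hdw : Set.EqOn (derivWithin (fun z => f (ϑ z)) (Set.Ioi 0))
        (fun z => f' (ϑ z) * F (ϑ z)) (Set.Ioi 0) := fun z hz =>
      (hd z hz).hasDerivWithinAt.derivWithin (uniqueDiffOn_Ioi 0 z hz)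
    obtain ⟨h1, K, hK, h2⟩ := ih (hsf.mul (hF (n+1)) (q := m + ν) (by ring))
    constructor
    · rw [Nat.cast_add, Nat.cast_one, contDiffOn_succ_iff_derivWithin (uniqueDiffOn_Ioi 0)]
      refine ⟨fun z hz => (hd z hz).differentiableAt.differentiableWithinAt, ?_,
        h1.congr hdw⟩
      intro h
      exact absurd h (by simp)
    · refine ⟨K, hK, fun z hz => ?_⟩
      rw [iteratedDerivWithin_succ', iteratedDerivWithin_congr hdw hz]
      convert h2 z hz using 3
      push_cast
      ring

end IsSymbol

lemma isSymbol_of_iteratedDerivWithin {b : ℝ → ℝ} {m : ℝ}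
    (hbsmooth : ContDiffOn ℝ (⊤ : ℕ∞) b (Set.Ioc 0 (Real.pi/2)))
    (hbder : ∀ k : ℕ, ∃ Ck : ℝ, ∀ θ ∈ Set.Ioc (0:ℝ) (Real.pi/2),
      |iteratedDerivWithin k b (Set.Ioc 0 (Real.pi/2)) θ| ≤ Ck * θ ^ (m - (k : ℝ)))
    (n k : ℕ) :
    IsSymbol n (m - k) (iteratedDerivWithin k b (Set.Ioc 0 (Real.pi/2))) := by
  have key : ∀ k : ℕ, ∃ K : ℝ, 0 ≤ K ∧ ∀ θ ∈ Set.Ioo (0:ℝ) (Real.pi/2),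
      |iteratedDerivWithin k b (Set.Ioc 0 (Real.pi/2)) θ| ≤ K * θ ^ (m - (k : ℝ)) := by
    intro k
    obtain ⟨K, hK⟩ := hbder k
    refine ⟨|K|, abs_nonneg _, fun θ hθ => (hK θ ⟨hθ.1, hθ.2.le⟩).trans ?_⟩
    exact mul_le_mul_of_nonneg_right (le_abs_self _) (Real.rpow_nonneg hθ.1.le _)
  induction n generalizing k with
  | zero => exact key k
  | succ n ih =>
    refine ⟨key k, iteratedDerivWithin (k+1) b (Set.Ioc 0 (Real.pi/2)), fun θ hθ => ?_, ?_⟩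
    · have hd := hbsmooth.differentiableOn_iteratedDerivWithin (m := k)
        (by exact_mod_cast WithTop.coe_lt_top k) (uniqueDiffOn_Ioc 0 (Real.pi/2))
      rw [iteratedDerivWithin_succ]
      exact (hd θ ⟨hθ.1, hθ.2.le⟩).hasDerivWithinAt.hasDerivAt (Ioc_mem_nhds hθ.1 hθ.2)
    · have := ih (k+1)
      rwa [show m - ((k+1 : ℕ) : ℝ) = m - k - 1 by push_cast; ring] at this


/-- Let ν ∈ (0, 1) and b a C^∞ function on (0, π/2] with `c θ^{−1−ν} ≤ b(θ) ≤ C θ^{−1−ν}`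
and `|b^{(k)}(θ)| ≤ C_k θ^{−1−ν−k}` for every k ≥ 1. With `G(x) = ∫_x^{π/2} b` and
ϑ : [0, ∞) → (0, π/2] the inverse of G, ϑ is C^∞ on (0, ∞) and for every k ≥ 1 there is a
constant C′_k such that `|ϑ^{(k)}(z)| ≤ C′_k (1 + z)^{−1/ν − 1}` for all z > 0. -/
theorem stmt9 (ν c C : ℝ) (b : ℝ → ℝ)
    (hν : ν ∈ Set.Ioo (0:ℝ) 1) (hc : 0 < c) (hcC : c < C)
    (hbsmooth : ContDiffOn ℝ (⊤ : ℕ∞) b (Set.Ioc 0 (Real.pi/2)))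
    (hb : ∀ θ ∈ Set.Ioc (0:ℝ) (Real.pi/2),
      c * θ ^ (-1 - ν) ≤ b θ ∧ b θ ≤ C * θ ^ (-1 - ν))
    (hbder : ∀ k : ℕ, 1 ≤ k → ∃ Ck : ℝ, ∀ θ ∈ Set.Ioc (0:ℝ) (Real.pi/2),
      |iteratedDerivWithin k b (Set.Ioc 0 (Real.pi/2)) θ| ≤ Ck * θ ^ (-1 - ν - (k : ℝ)))
    (ϑ : ℝ → ℝ)
    (hϑmem : ∀ z, 0 ≤ z → ϑ z ∈ Set.Ioc 0 (Real.pi/2))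
    (hϑinv : ∀ z, 0 ≤ z → ∫ θ in (ϑ z)..(Real.pi/2), b θ = z) :
    ContDiffOn ℝ (⊤ : ℕ∞) ϑ (Set.Ioi 0) ∧
    ∀ k : ℕ, 1 ≤ k → ∃ Ck : ℝ, ∀ z : ℝ, 0 < z →
      |iteratedDerivWithin k ϑ (Set.Ioi 0) z| ≤ Ck * (1 + z) ^ (-1/ν - 1) := by
  have hν0 : 0 < ν := hν.1
  have hpi : 0 < Real.pi / 2 := by positivity
  have hlow : ∀ θ ∈ Set.Ioc (0:ℝ) (Real.pi/2), c * (Real.pi/2) ^ (-1 - ν) ≤ b θ := fun θ hθ =>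
    le_trans (mul_le_mul_of_nonneg_left
      (Real.rpow_le_rpow_of_nonpos hθ.1 hθ.2 (by linarith)) hc.le) (hb θ hθ).1
  set μ := c * (Real.pi/2) ^ (-1 - ν) with hμ
  have hμ0 : 0 < μ := mul_pos hc (Real.rpow_pos_of_pos hpi _)
  have hint : ∀ x ∈ Set.Ioc (0:ℝ) (Real.pi/2), ∀ y ∈ Set.Ioc (0:ℝ) (Real.pi/2),
      IntervalIntegrable b MeasureTheory.volume x y := by
    intro x hx y hy
    refine ContinuousOn.intervalIntegrable (hbsmooth.continuousOn.mono ?_)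
    exact Set.OrdConnected.uIcc_subset Set.ordConnected_Ioc hx hy
  have hpm : Real.pi / 2 ∈ Set.Ioc (0:ℝ) (Real.pi/2) := ⟨hpi, le_rfl⟩
  have hmem : ∀ z, 0 < z → ϑ z ∈ Set.Ioo 0 (Real.pi/2) := by
    intro z hz
    refine ⟨(hϑmem z hz.le).1, lt_of_le_of_ne (hϑmem z hz.le).2 fun h => ?_⟩
    have := hϑinv z hz.le
    rw [h, intervalIntegral.integral_same] at this
    exact hz.ne this
  -- The lower bound `μ ≤ b` gives `μ |ϑ z - ϑ w| ≤ |z - w|`.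
  have hsub : ∀ z w, 0 ≤ z → 0 ≤ w → ϑ z ≤ ϑ w → μ * (ϑ w - ϑ z) ≤ z - w := by
    intro z w hz hw hle
    have h1 := intervalIntegral.integral_add_adjacent_intervals
      (hint _ (hϑmem z hz) _ (hϑmem w hw)) (hint _ (hϑmem w hw) _ hpm)
    rw [hϑinv z hz, hϑinv w hw] at h1
    have h2 : ∫ _ in (ϑ z)..(ϑ w), μ ≤ ∫ θ in (ϑ z)..(ϑ w), b θ := by
      refine intervalIntegral.integral_mono_on hle (by simp)
        (hint _ (hϑmem z hz) _ (hϑmem w hw)) fun x hx => hlow x ?_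
      exact ⟨lt_of_lt_of_le (hϑmem z hz).1 hx.1, hx.2.trans (hϑmem w hw).2⟩
    rw [intervalIntegral.integral_const, smul_eq_mul] at h2
    linarith
  have hlip : ∀ z w, 0 ≤ z → 0 ≤ w → |ϑ z - ϑ w| ≤ μ⁻¹ * |z - w| := by
    intro z w hz hw
    rw [inv_mul_eq_div, le_div_iff₀ hμ0, mul_comm]
    rcases le_total (ϑ z) (ϑ w) with h | h
    · rw [abs_sub_comm, abs_of_nonneg (sub_nonneg.2 h)]
      exact (hsub z w hz hw h).trans (le_abs_self _)
    · rw [abs_of_nonneg (sub_nonneg.2 h), abs_sub_comm z w]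
      exact (hsub w z hw hz h).trans (le_abs_self _)
  have hcont : ∀ z, 0 < z → ContinuousAt ϑ z := by
    intro z hz
    have hL : LipschitzOnWith (Real.toNNReal μ⁻¹) ϑ (Set.Ici 0) := by
      refine LipschitzOnWith.of_dist_le_mul fun x hx y hy => ?_
      rw [Real.coe_toNNReal _ (inv_pos.2 hμ0).le, Real.dist_eq, Real.dist_eq]
      exact hlip x y hx hy
    exact hL.continuousOn.continuousAt (Ici_mem_nhds hz)
  have hder : ∀ z, 0 < z → HasDerivAt ϑ (-(b (ϑ z))⁻¹) z := by
    intro z hz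
    have hz' := hmem z hz
    have hbc : ContinuousOn b (Set.Ioo 0 (Real.pi/2)) :=
      hbsmooth.continuousOn.mono Set.Ioo_subset_Ioc_self
    have hG : HasDerivAt (fun x => ∫ θ in x..(Real.pi/2), b θ) (-b (ϑ z)) (ϑ z) :=
      intervalIntegral.integral_hasDerivAt_left (hint _ (hϑmem z hz.le) _ hpm)
        (hbc.stronglyMeasurableAtFilter isOpen_Ioo _ hz')
        (hbc.continuousAt (isOpen_Ioo.mem_nhds hz'))
    have hbpos : 0 < b (ϑ z) := hμ0.trans_le (hlow _ (hϑmem z hz.le))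
    rw [← inv_neg]
    refine HasDerivAt.of_local_left_inverse (hcont z hz) hG (by simpa using hbpos.ne') ?_
    filter_upwards [Ioi_mem_nhds hz] with y hy using hϑinv y (le_of_lt hy)
  have hbsym : ∀ n, IsSymbol n (-1 - ν) b := by
    intro n
    have := isSymbol_of_iteratedDerivWithin (m := -1 - ν) hbsmooth (fun k => ?_) n 0
    · simpa using this
    · rcases Nat.eq_zero_or_pos k with rfl | hk
      · refine ⟨C, fun θ hθ => ?_⟩
        have hbpos : 0 < b θ := hμ0.trans_le (hlow _ hθ)
        simpa [abs_of_pos hbpos] using (hb θ hθ).2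
      · exact hbder k hk
  have hF : ∀ n, IsSymbol n (1 + ν) (fun x => -(b x)⁻¹) := by
    intro n
    have := ((hbsym n).inv hc fun θ hθ => (hb θ ⟨hθ.1, hθ.2.le⟩).1).neg
    rwa [show -(-1 - ν) = 1 + ν by ring] at this
  have hdw : Set.EqOn (derivWithin ϑ (Set.Ioi 0)) (fun z => -(b (ϑ z))⁻¹) (Set.Ioi 0) :=
    fun z hz => (hder z hz).hasDerivWithinAt.derivWithin (uniqueDiffOn_Ioi 0 z hz)
  have hcomp := fun n : ℕ => IsSymbol.comp hF hmem hder (hF (n+1))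
  refine ⟨?_, ?_⟩
  · rw [contDiffOn_infty]
    intro n
    refine ContDiffOn.of_le (n := (n : WithTop ℕ∞) + 1) ?_ le_self_add
    rw [contDiffOn_succ_iff_derivWithin (uniqueDiffOn_Ioi 0)]
    exact ⟨fun z hz => (hder z hz).differentiableAt.differentiableWithinAt,
      fun h => absurd h (by simp), (hcomp n).1.congr hdw⟩
  -- The decay `1 + z ≤ A ϑ(z)^{-ν}`, from integrating the upper bound on `b`.
  have hC0 : 0 < C := hc.trans hcC
  obtain ⟨A, hA, hdecay⟩ : ∃ A : ℝ, 0 < A ∧ ∀ z, 0 < z → 1 + z ≤ A * ϑ z ^ (-ν) := by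
    refine ⟨C / ν + (Real.pi/2) ^ ν, by positivity, fun z hz => ?_⟩
    have hz' := hmem z hz
    have h0 : (0:ℝ) ∉ Set.uIcc (ϑ z) (Real.pi/2) := by
      rw [Set.uIcc_of_le hz'.2.le]
      exact fun h => absurd h.1 (not_le.2 hz'.1)
    have h1 : z ≤ ∫ θ in (ϑ z)..(Real.pi/2), C * θ ^ (-1 - ν) := by
      conv_lhs => rw [← hϑinv z hz.le]
      refine intervalIntegral.integral_mono_on hz'.2.le (hint _ (hϑmem z hz.le) _ hpm)
        ((intervalIntegral.intervalIntegrable_rpow (Or.inr h0)).const_mul C) fun x hx => ?_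
      exact (hb x ⟨lt_of_lt_of_le hz'.1 hx.1, hx.2⟩).2
    rw [intervalIntegral.integral_const_mul, integral_rpow (Or.inr ⟨by linarith, h0⟩),
      show -1 - ν + 1 = -ν by ring] at h1
    have h2 : C * (((Real.pi/2) ^ (-ν) - ϑ z ^ (-ν)) / -ν)
        = C / ν * ϑ z ^ (-ν) - C / ν * (Real.pi/2) ^ (-ν) := by
      field_simp
      ring
    have h3 : 0 ≤ C / ν * (Real.pi/2) ^ (-ν) := by positivity
    have h4 : 1 ≤ (Real.pi/2) ^ ν * ϑ z ^ (-ν) := by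
      have : (Real.pi/2) ^ ν * (Real.pi/2) ^ (-ν) = 1 := by
        rw [← Real.rpow_add hpi, add_neg_cancel, Real.rpow_zero]
      rw [← this]
      exact mul_le_mul_of_nonneg_left
        (Real.rpow_le_rpow_of_nonpos hz'.1 hz'.2.le (by linarith)) (by positivity)
    rw [add_mul]
    linarith
  intro k hk
  obtain ⟨n, rfl⟩ : ∃ n, k = n + 1 := ⟨k - 1, by omega⟩
  obtain ⟨-, K, hK, hbound⟩ := hcomp n
  refine ⟨K * (Real.pi/2) ^ (n * ν) * A ^ (1/ν + 1), fun z hz => ?_⟩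
  have hz' := hmem z hz
  have hz1 : 0 < 1 + z := by linarith
  rw [iteratedDerivWithin_succ', iteratedDerivWithin_congr hdw hz]
  refine (hbound z hz).trans ?_
  rw [Real.rpow_add hz'.1, mul_assoc, mul_assoc]
  refine mul_le_mul_of_nonneg_left ?_ hK
  rw [mul_comm]
  refine mul_le_mul (Real.rpow_le_rpow hz'.1.le hz'.2.le (by positivity)) ?_
    (Real.rpow_nonneg hz'.1.le _) (by positivity)
  -- Raise the decay estimate to the power `1/ν + 1`, noting `-ν (1/ν + 1) = -(1 + ν)`.
  have h1 := Real.rpow_le_rpow hz1.le (hdecay z hz) (show 0 ≤ 1/ν + 1 by positivity)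
  rw [Real.mul_rpow hA.le (Real.rpow_nonneg hz'.1.le _), ← Real.rpow_mul hz'.1.le,
    show -ν * (1/ν + 1) = -(1 + ν) by field_simp, Real.rpow_neg hz'.1.le,
    ← div_eq_mul_inv, le_div_iff₀ (Real.rpow_pos_of_pos hz'.1 _)] at h1
  rw [show -1/ν - 1 = -(1/ν + 1) by ring, Real.rpow_neg hz1.le, ← div_eq_mul_inv,
    le_div_iff₀ (Real.rpow_pos_of_pos hz1 _), mul_comm]
  exact h1
end

section
/- Let γ ∈ (0, 1), Γ ≥ 1, and let φ : [0, ∞) → (0, ∞) be a nondecreasing 1-Lipschitz function such that φ(x) = Γ for all x ≥ Γ + 1, φ(x) ≥ x/2 for all x ∈ [0, Γ + 1], and φ(x) ≤ Γ for all x ≥ 0. Then for every β ∈ (0, 1] there exists a constant C_β, depending only on β and γ (not on Γ or φ), such that for all x, y ≥ 0: x^β |φ(x)^γ − φ(y)^γ| ≤ C_β Γ^γ |x − y|^β. -/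
/-!
Write `D = |φ(x)^γ − φ(y)^γ|`. Since `0 < φ ≤ Γ`, one has `D ≤ Γ^γ`. The case `β = 1`, namely
`x D ≤ 4 Γ^γ |x − y|`, is the core: it is immediate from `D ≤ Γ^γ` when `x ≤ 4 |x − y|`.
Otherwise `y ≥ 3x/4`, and either both points lie in the region where `φ` is constant, or
`M = max (φ x) (φ y)` is at least `x/4`; then `M D ≤ M^γ |φ x − φ y| ≤ Γ^γ |x − y|`
(`max_mul_abs_rpow_sub_le`). Interpolating, `x^β D = (x D)^β D^(1-β) ≤ 4^β Γ^γ |x − y|^β`.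
-/

/-- Quantitative concavity of `t ↦ t^γ`, homogeneous form: it rests on `b/a ≤ (b/a)^γ`
for `b ≤ a`. -/
lemma mul_rpow_sub_le {γ a b : ℝ} (hγ1 : γ ≤ 1) (hb : 0 < b) (hab : b ≤ a) :
    a * (a ^ γ - b ^ γ) ≤ a ^ γ * (a - b) := by
  have ha : 0 < a := hb.trans_le hab
  have h1 : b / a ≤ (b / a) ^ γ :=
    Real.self_le_rpow_of_le_one (by positivity) ((div_le_one ha).2 hab) hγ1
  rw [Real.div_rpow hb.le ha.le, div_le_div_iff₀ ha (by positivity)] at h1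
  nlinarith

lemma max_mul_abs_rpow_sub_le {γ a b : ℝ} (hγ0 : 0 ≤ γ) (hγ1 : γ ≤ 1) (ha : 0 < a)
    (hb : 0 < b) : max a b * |a ^ γ - b ^ γ| ≤ max a b ^ γ * |a - b| := by
  rcases le_total b a with h | h
  · rw [max_eq_left h, abs_of_nonneg (sub_nonneg.2 (Real.rpow_le_rpow hb.le h hγ0)),
      abs_of_nonneg (sub_nonneg.2 h)]
    exact mul_rpow_sub_le hγ1 hb h
  · rw [max_eq_right h, abs_sub_comm, abs_sub_comm a b,
      abs_of_nonneg (sub_nonneg.2 (Real.rpow_le_rpow ha.le h hγ0)),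
      abs_of_nonneg (sub_nonneg.2 h)]
    exact mul_rpow_sub_le hγ1 ha h

/-- Let γ ∈ (0, 1). For every β ∈ (0, 1] there is a constant C_β (depending only on β
and γ) such that for every Γ ≥ 1 and every nondecreasing 1-Lipschitz function
φ : [0, ∞) → (0, ∞) with φ = Γ on [Γ + 1, ∞), φ(x) ≥ x/2 on [0, Γ + 1] and φ ≤ Γ,
one has `x^β |φ(x)^γ − φ(y)^γ| ≤ C_β Γ^γ |x − y|^β` for all x, y ≥ 0. -/
theorem stmt10 (γ β : ℝ) (hγ : γ ∈ Set.Ioo (0:ℝ) 1) (hβ : β ∈ Set.Ioc (0:ℝ) 1) :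
    ∃ Cβ : ℝ, 0 < Cβ ∧ ∀ (Γ : ℝ), 1 ≤ Γ → ∀ φ : ℝ → ℝ,
      (∀ x, 0 ≤ x → 0 < φ x) →
      (∀ x y, 0 ≤ x → x ≤ y → φ x ≤ φ y) →
      (∀ x y, 0 ≤ x → 0 ≤ y → |φ x - φ y| ≤ |x - y|) →
      (∀ x, Γ + 1 ≤ x → φ x = Γ) →
      (∀ x, x ∈ Set.Icc (0:ℝ) (Γ + 1) → x / 2 ≤ φ x) →
      (∀ x, 0 ≤ x → φ x ≤ Γ) →
      ∀ x y, 0 ≤ x → 0 ≤ y →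
        x ^ β * |φ x ^ γ - φ y ^ γ| ≤ Cβ * Γ ^ γ * |x - y| ^ β := by
  obtain ⟨hγ0, hγ1⟩ := hγ
  obtain ⟨hβ0, hβ1⟩ := hβ
  refine ⟨4 ^ β, by positivity, ?_⟩
  intro Γ hΓ φ hpos _ hlip hconst hlow hup x y hx hy
  have hΓ0 : 0 < Γ := by linarith
  have hG : 0 < Γ ^ γ := by positivity
  have hφx := hpos x hx
  have hφy := hpos y hy
  set D := |φ x ^ γ - φ y ^ γ| with hD
  have hD0 : 0 ≤ D := abs_nonneg _
  have hDG : D ≤ Γ ^ γ := by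
    have h1 := Real.rpow_le_rpow hφx.le (hup x hx) hγ0.le
    have h2 := Real.rpow_le_rpow hφy.le (hup y hy) hγ0.le
    have h3 : 0 < φ x ^ γ := by positivity
    have h4 : 0 < φ y ^ γ := by positivity
    exact abs_le.2 ⟨by linarith, by linarith⟩
  have hxy0 : 0 ≤ |x - y| := abs_nonneg _
  have hmain : x * D ≤ 4 * Γ ^ γ * |x - y| := by
    rcases le_total x (4 * |x - y|) with h | h
    · nlinarith [mul_le_mul h hDG hD0 (by positivity)]
    · have hy' : 3 * x ≤ 4 * y := by linarith [le_abs_self (x - y)]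
      by_cases hboth : Γ + 1 ≤ x ∧ Γ + 1 ≤ y
      · have : D = 0 := by simp [hD, hconst x hboth.1, hconst y hboth.2]
        rw [this, mul_zero]
        positivity
      · have hM : x ≤ 4 * max (φ x) (φ y) := by
          rcases le_total x (Γ + 1) with hx1 | hx1
          · linarith [hlow x ⟨hx, hx1⟩, le_max_left (φ x) (φ y)]
          · have hy1 : y ≤ Γ + 1 := by
              by_contra hc
              exact hboth ⟨hx1, (not_le.1 hc).le⟩
            linarith [hlow y ⟨hy, hy1⟩, le_max_right (φ x) (φ y)]
        have hMD := max_mul_abs_rpow_sub_le hγ0.le hγ1.le hφx hφy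
        have hMG : max (φ x) (φ y) ^ γ ≤ Γ ^ γ :=
          Real.rpow_le_rpow (hφx.le.trans (le_max_left _ _))
            (max_le (hup x hx) (hup y hy)) hγ0.le
        have h5 := mul_le_mul hMG (hlip x y hx hy) (abs_nonneg _) hG.le
        have h6 := mul_le_mul_of_nonneg_right hM hD0
        linarith
  have hsplit : ∀ t : ℝ, 0 ≤ t → t ^ β * t ^ (1 - β) = t := fun t ht => by
    rw [← Real.rpow_add' ht (by norm_num), add_sub_cancel, Real.rpow_one]
  calc x ^ β * D = (x * D) ^ β * D ^ (1 - β) := by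
        rw [Real.mul_rpow hx hD0, mul_assoc, hsplit D hD0]
    _ ≤ (4 * Γ ^ γ * |x - y|) ^ β * (Γ ^ γ) ^ (1 - β) :=
        mul_le_mul (Real.rpow_le_rpow (by positivity) hmain hβ0.le)
          (Real.rpow_le_rpow hD0 hDG (by linarith)) (by positivity) (by positivity)
    _ = 4 ^ β * ((Γ ^ γ) ^ β * (Γ ^ γ) ^ (1 - β)) * |x - y| ^ β := by
        rw [Real.mul_rpow (by positivity) hxy0, Real.mul_rpow (by norm_num) hG.le]
        ring
    _ = 4 ^ β * Γ ^ γ * |x - y| ^ β := by rw [hsplit _ hG.le]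
end

section
/- For all a > 0 and b > 0 there exist constants 0 < c_{a,b} ≤ C_{a,b} such that for all x, y ≥ 0: c_{a,b} |x^{a+b} − y^{a+b}| ≤ (x^a + y^a) |x^b − y^b| ≤ C_{a,b} |x^{a+b} − y^{a+b}|. -/
/-!
By symmetry let `y ≤ x`; then `c = b / (a + b)` and `C = 2` work.

* Upper bound: `(x^a + y^a)(x^b - y^b) ≤ 2 x^a (x^b - y^b) ≤ 2 (x^(a+b) - y^(a+b))`, as
  `y^a ≤ x^a`.
* Lower bound: drop the term in `y^a` and apply weighted AM-GM,
  `x^a y^b ≤ a/(a+b) x^(a+b) + b/(a+b) y^(a+b)`, to get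
  `x^a (x^b - y^b) ≥ b/(a+b) (x^(a+b) - y^(a+b))`.
-/

lemma stmt11_of_le (a b : ℝ) (ha : 0 < a) (hb : 0 < b) (x y : ℝ) (hy : 0 ≤ y) (hyx : y ≤ x) :
    b / (a + b) * |x ^ (a + b) - y ^ (a + b)| ≤ (x ^ a + y ^ a) * |x ^ b - y ^ b| ∧
      (x ^ a + y ^ a) * |x ^ b - y ^ b| ≤ 2 * |x ^ (a + b) - y ^ (a + b)| := by
  have hx : 0 ≤ x := hy.trans hyx
  have hab : 0 < a + b := add_pos ha hb
  have h1 : y ^ a ≤ x ^ a := Real.rpow_le_rpow hy hyx ha.le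
  have h2 : y ^ b ≤ x ^ b := Real.rpow_le_rpow hy hyx hb.le
  have h3 : y ^ (a + b) ≤ x ^ (a + b) := Real.rpow_le_rpow hy hyx hab.le
  have hya : 0 ≤ y ^ a := Real.rpow_nonneg hy a
  have hyb : 0 ≤ y ^ b := Real.rpow_nonneg hy b
  have hxe : x ^ (a + b) = x ^ a * x ^ b := Real.rpow_add_of_nonneg hx ha.le hb.le
  have hye : y ^ (a + b) = y ^ a * y ^ b := Real.rpow_add_of_nonneg hy ha.le hb.le
  have hsum : a / (a + b) + b / (a + b) = 1 := by field_simp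
  have amgm : x ^ a * y ^ b ≤ a / (a + b) * x ^ (a + b) + b / (a + b) * y ^ (a + b) := by
    have h := Real.geom_mean_le_arith_mean2_weighted (div_nonneg ha.le hab.le)
      (div_nonneg hb.le hab.le) (Real.rpow_nonneg hx (a + b)) (Real.rpow_nonneg hy (a + b)) hsum
    rwa [← Real.rpow_mul hx, ← Real.rpow_mul hy, mul_div_cancel₀ _ hab.ne',
      mul_div_cancel₀ _ hab.ne'] at h
  rw [abs_of_nonneg (sub_nonneg.2 h2), abs_of_nonneg (sub_nonneg.2 h3)]
  constructor
  · have hw : a / (a + b) = 1 - b / (a + b) := by linarith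
    rw [hw] at amgm
    have := mul_nonneg hya (sub_nonneg.2 h2)
    linarith
  · rw [hxe, hye]
    nlinarith [mul_nonneg (sub_nonneg.2 h1) (sub_nonneg.2 h2), mul_nonneg (sub_nonneg.2 h1) hyb]

/-- For all a, b > 0 there exist constants `0 < c ≤ C` such that for all x, y ≥ 0:
`c |x^{a+b} − y^{a+b}| ≤ (x^a + y^a)|x^b − y^b| ≤ C |x^{a+b} − y^{a+b}|`. -/
theorem stmt11 (a b : ℝ) (ha : 0 < a) (hb : 0 < b) :
    ∃ c C : ℝ, 0 < c ∧ c ≤ C ∧ ∀ x y : ℝ, 0 ≤ x → 0 ≤ y →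
      c * |x ^ (a + b) - y ^ (a + b)| ≤ (x ^ a + y ^ a) * |x ^ b - y ^ b| ∧
      (x ^ a + y ^ a) * |x ^ b - y ^ b| ≤ C * |x ^ (a + b) - y ^ (a + b)| := by
  refine ⟨b / (a + b), 2, by positivity, ?_, fun x y hx hy => ?_⟩
  · rw [div_le_iff₀ (by positivity)]
    linarith
  · rcases le_total y x with h | h
    · exact stmt11_of_le a b ha hb x y hy h
    · rw [abs_sub_comm (x ^ (a + b)), abs_sub_comm (x ^ b), add_comm (x ^ a)]
      exact stmt11_of_le a b ha hb y x hx h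
end

section
/- Let ν ∈ (0, 1/2) and γ ∈ (0, 1) with γ > ν²/(1 − 2ν). Then: q_{γ,ν} > 1 ⟺ a_{γ,ν} > 1 ⟺ (ν < 1/3 and γ > (2ν + 2ν²)/(1 − 3ν)); and q_{γ,ν} > 2 ⟺ a_{γ,ν} > 2 ⟺ (ν < 1/4 and γ > (6ν + 3ν²)/(1 − 4ν)). Moreover q_{γ,ν} = p(min(a_{γ,ν}, 2)), and in particular q_{γ,ν} > 2 whenever a_{γ,ν} > 2. -/
/-!
Put `F(t) = ν t² + ν(γ + ν + 1) t`, a strictly increasing function of `t ≥ 0`. The number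
`a = a_{γ,ν}` is the positive root of `F(a) = γ(1 - 2ν) - ν²` (`aPar_spec`), so for `t ≥ 0` one has
`t < a` iff `F(t) < γ(1 - 2ν) - ν²` (`lt_aPar_iff`). At `t = 1` and `t = 2` the latter inequality
is affine in `γ` and gives the two explicit thresholds. Clearing the (positive) denominator of `p`
shows that `p(t) = t` and `t < p(t)` are equivalent to `F(t) = γ(1 - 2ν) - ν²` and
`F(t) < γ(1 - 2ν) - ν²` respectively. Hence `p(a) = a`, and `p(2) > 2` when `a > 2`, which yields
the statements on `q`.
-/

/-- `p(α) = ((α + γ)(1 − 2ν) − ν²) / ((α + γ + ν − 1)ν + 1)`. -/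
noncomputable def pfun (γ ν α : ℝ) : ℝ :=
  ((α + γ) * (1 - 2*ν) - ν^2) / ((α + γ + ν - 1) * ν + 1)

/-- `a_{γ,ν} = ½[ √((γ + ν + 1)² + 4(γ(1 − 2ν)/ν − ν)) − (γ + ν + 1) ]`. -/
noncomputable def aPar (γ ν : ℝ) : ℝ :=
  (Real.sqrt ((γ + ν + 1)^2 + 4 * (γ * (1 - 2*ν) / ν - ν)) - (γ + ν + 1)) / 2

/-- `q_{γ,ν} = a_{γ,ν}` if `a_{γ,ν} ≤ 2`, and `q_{γ,ν} = p(2)` otherwise. -/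
noncomputable def qPar (γ ν : ℝ) : ℝ :=
  if aPar γ ν ≤ 2 then aPar γ ν
  else ((2 + γ) * (1 - 2*ν) - ν^2) / ((1 + γ + ν) * ν + 1)

/-- `a_{γ,ν}` is the positive root of its defining quadratic equation. -/
lemma aPar_spec {γ ν : ℝ} (hν : 0 < ν) (hγ : 0 < γ) (h : ν^2 < γ * (1 - 2*ν)) :
    0 < aPar γ ν ∧
      ν * aPar γ ν ^ 2 + ν * (γ + ν + 1) * aPar γ ν = γ * (1 - 2*ν) - ν^2 := by
  have hc : 0 < γ * (1 - 2*ν) / ν - ν := by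
    rw [sub_pos, lt_div_iff₀ hν]
    nlinarith
  have hs := Real.sq_sqrt
    (show 0 ≤ (γ + ν + 1)^2 + 4 * (γ * (1 - 2*ν) / ν - ν) by positivity)
  have hlt : γ + ν + 1 < √((γ + ν + 1)^2 + 4 * (γ * (1 - 2*ν) / ν - ν)) :=
    Real.lt_sqrt_of_sq_lt (by linarith)
  have hm : ν * (γ * (1 - 2*ν) / ν) = γ * (1 - 2*ν) := by field_simp
  unfold aPar
  refine ⟨by linarith, ?_⟩
  linear_combination ν / 4 * hs + hm

/-- Comparison with `a_{γ,ν}` is a polynomial inequality, by monotonicity of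
`t ↦ ν t² + ν(γ + ν + 1) t` on `t ≥ 0`. -/
lemma lt_aPar_iff {γ ν : ℝ} (hν : 0 < ν) (hγ : 0 < γ) (h : ν^2 < γ * (1 - 2*ν))
    {t : ℝ} (ht : 0 ≤ t) :
    t < aPar γ ν ↔ ν * t^2 + ν * (γ + ν + 1) * t < γ * (1 - 2*ν) - ν^2 := by
  obtain ⟨ha, heq⟩ := aPar_spec hν hγ h
  have hpos : 0 < ν * (aPar γ ν + t + γ + ν + 1) := by positivity
  rw [← heq, ← sub_pos, ← sub_pos (b := ν * t^2 + ν * (γ + ν + 1) * t),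
    ← mul_pos_iff_of_pos_left hpos]
  ring_nf

/-- Let ν ∈ (0, 1/2) and γ ∈ (0, 1) with γ > ν²/(1 − 2ν). Then
q > 1 iff a > 1 iff (ν < 1/3 and γ > (2ν + 2ν²)/(1 − 3ν));
q > 2 iff a > 2 iff (ν < 1/4 and γ > (6ν + 3ν²)/(1 − 4ν));
moreover q = p(min(a, 2)) and q > 2 whenever a > 2. -/
theorem stmt16 (γ ν : ℝ) (hν : ν ∈ Set.Ioo (0:ℝ) (1/2)) (hγ : γ ∈ Set.Ioo (0:ℝ) 1)
    (hγν : ν^2 / (1 - 2*ν) < γ) :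
    ((1 < qPar γ ν ↔ 1 < aPar γ ν) ∧
      (1 < aPar γ ν ↔ (ν < 1/3 ∧ (2*ν + 2*ν^2) / (1 - 3*ν) < γ))) ∧
    ((2 < qPar γ ν ↔ 2 < aPar γ ν) ∧
      (2 < aPar γ ν ↔ (ν < 1/4 ∧ (6*ν + 3*ν^2) / (1 - 4*ν) < γ))) ∧
    qPar γ ν = pfun γ ν (min (aPar γ ν) 2) ∧
    (2 < aPar γ ν → 2 < qPar γ ν) := by
  obtain ⟨hν0, hν1⟩ := hν
  obtain ⟨hγ0, hγ1⟩ := hγ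
  have h : ν^2 < γ * (1 - 2*ν) := (div_lt_iff₀ (by linarith)).1 hγν
  obtain ⟨ha, heq⟩ := aPar_spec hν0 hγ0 h
  have h1 := lt_aPar_iff hν0 hγ0 h (t := 1) (by norm_num)
  have h2 := lt_aPar_iff hν0 hγ0 h (t := 2) (by norm_num)
  have hqle : aPar γ ν ≤ 2 → qPar γ ν = aPar γ ν := fun hle => if_pos hle
  have hqgt : 2 < aPar γ ν → 2 < qPar γ ν := by
    intro hgt
    rw [qPar, if_neg (not_le.2 hgt), lt_div_iff₀ (by positivity)]
    linarith [h2.1 hgt]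
  refine ⟨⟨?_, ?_⟩, ⟨?_, ?_⟩, ?_, hqgt⟩
  · rcases le_or_gt (aPar γ ν) 2 with hle | hgt
    · rw [hqle hle]
    · exact iff_of_true (by linarith [hqgt hgt]) (by linarith)
  · rw [h1]
    constructor
    · intro hlt
      -- The right-hand side of `2ν + 2ν² < γ(1 - 3ν)` must be positive.
      have hν3 : ν < 1/3 := by nlinarith
      refine ⟨hν3, ?_⟩
      rw [div_lt_iff₀ (by linarith)]
      linarith
    · rintro ⟨hν3, hlt⟩
      rw [div_lt_iff₀ (by linarith)] at hlt
      linarith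
  · rcases le_or_gt (aPar γ ν) 2 with hle | hgt
    · rw [hqle hle]
    · exact iff_of_true (hqgt hgt) hgt
  · rw [h2]
    constructor
    · intro hlt
      -- The right-hand side of `6ν + 3ν² < γ(1 - 4ν)` must be positive.
      have hν4 : ν < 1/4 := by nlinarith
      refine ⟨hν4, ?_⟩
      rw [div_lt_iff₀ (by linarith)]
      linarith
    · rintro ⟨hν4, hlt⟩
      rw [div_lt_iff₀ (by linarith)] at hlt
      linarith
  · rcases le_or_gt (aPar γ ν) 2 with hle | hgt
    · have hden : 0 < (aPar γ ν + γ + ν - 1) * ν + 1 := by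
        nlinarith [mul_pos ha hν0, mul_pos hγ0 hν0]
      rw [hqle hle, min_eq_left hle, pfun, eq_div_iff hden.ne']
      linear_combination heq
    · rw [qPar, if_neg (not_le.2 hgt), min_eq_right hgt.le, pfun]
      congr 1
      ring
end

section
/- Let ν ∈ (0, 1/2) and γ ∈ (0, 1) with γ > ν²/(1 − 2ν), and let q ∈ (0, q_{γ,ν}). Then there exist an integer n₀ ≥ 1 and real numbers 0 = α₀ < α₁ < … < α_{n₀} such that α_k ∈ [0, 2) for every k ∈ {0, …, n₀ − 1}, α_{k+1} < p(α_k) for every k ∈ {0, …, n₀ − 1}, and α_{n₀} ≥ q. -/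
/-- `N(α) - α D(α)` for `p = N / D`; it has the sign of `p(α) - α` wherever `D(α) > 0`. -/
noncomputable def gap (γ ν α : ℝ) : ℝ :=
  γ * (1 - 2*ν) - ν^2 - ν * (1 + γ + ν) * α - ν * α^2

/-- The denominator of `p`. -/
noncomputable def den (γ ν α : ℝ) : ℝ := (α + γ + ν - 1) * ν + 1

lemma den_pos {γ ν α : ℝ} (hν : ν ∈ Set.Ioo (0:ℝ) (1/2)) (hγ : 0 < γ) (hα : 0 ≤ α) :
    0 < den γ ν α := by
  obtain ⟨h0, h1⟩ := hν
  unfold den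
  nlinarith [mul_nonneg hα h0.le, mul_pos hγ h0, mul_pos h0 h0]

lemma lt_pfun_of_mul_den_lt_gap {γ ν α δ : ℝ} (hν : ν ∈ Set.Ioo (0:ℝ) (1/2)) (hγ : 0 < γ)
    (hα : 0 ≤ α) (h : δ * den γ ν α < gap γ ν α) : α + δ < pfun γ ν α := by
  have hd := den_pos hν hγ hα
  unfold pfun
  unfold gap at h
  unfold den at h hd
  rw [lt_div_iff₀ hd]
  linarith

lemma gap_pos {γ ν α : ℝ} (hν : ν ∈ Set.Ioo (0:ℝ) (1/2)) (hγ : 0 < γ)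
    (hγν : ν^2 / (1 - 2*ν) < γ) (hα : 0 ≤ α) (hαa : α < aPar γ ν) : 0 < gap γ ν α := by
  obtain ⟨h0, h1⟩ := hν
  have hc : 0 < γ * (1 - 2*ν) - ν^2 := by
    rw [div_lt_iff₀ (by linarith)] at hγν
    linarith
  have hdisc : 0 ≤ (γ + ν + 1)^2 + 4 * (γ * (1 - 2*ν) / ν - ν) := by
    have : γ * (1 - 2*ν) / ν - ν = (γ * (1 - 2*ν) - ν^2) / ν := by field_simp
    rw [this]
    positivity
  have hs := Real.sq_sqrt hdisc
  have hroot : aPar γ ν ^ 2 + (γ + ν + 1) * aPar γ ν = γ * (1 - 2*ν) / ν - ν := by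
    unfold aPar
    linarith
  have hroot' : ν * aPar γ ν ^ 2 + ν * (γ + ν + 1) * aPar γ ν = γ * (1 - 2*ν) - ν^2 := by
    calc _ = ν * (aPar γ ν ^ 2 + (γ + ν + 1) * aPar γ ν) := by ring
      _ = _ := by rw [hroot]; field_simp
  have hfac : gap γ ν α = ν * ((aPar γ ν - α) * (aPar γ ν + α + (γ + ν + 1))) := by
    unfold gap
    rw [← hroot']
    ring
  rw [hfac]
  exact mul_pos h0 (mul_pos (by linarith) (by linarith))

lemma exists_endpoint {γ ν q : ℝ} (hν : ν ∈ Set.Ioo (0:ℝ) (1/2)) (hγ : 0 < γ)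
    (hγν : ν^2 / (1 - 2*ν) < γ) (hq : q ∈ Set.Ioo 0 (qPar γ ν)) :
    ∃ b, 0 < b ∧ b < 2 ∧ b < aPar γ ν ∧ q < pfun γ ν b := by
  obtain ⟨hq0, hq1⟩ := hq
  unfold qPar at hq1
  split_ifs at hq1 with ha
  · obtain ⟨b, hqb, hba⟩ := exists_between hq1
    have hb : 0 < b := hq0.trans hqb
    have hp := lt_pfun_of_mul_den_lt_gap (δ := 0) hν hγ hb.le
      (by rw [zero_mul]; exact gap_pos hν hγ hγν hb.le hba)
    exact ⟨b, hb, by linarith, hba, by linarith⟩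
  · have hcont : ContinuousAt (pfun γ ν) 2 := by
      unfold pfun
      exact ContinuousAt.div (by fun_prop) (by fun_prop) (den_pos hν hγ zero_le_two).ne'
    have hq2 : q < pfun γ ν 2 := by
      have hden : (2 + γ + ν - 1) * ν + 1 = (1 + γ + ν) * ν + 1 := by ring
      unfold pfun
      rw [hden]
      exact hq1
    have h1 : ∀ᶠ b in nhdsWithin (2:ℝ) (Set.Iio 2), q < pfun γ ν b :=
      nhdsWithin_le_nhds (hcont.eventually (lt_mem_nhds hq2))
    have h2 : ∀ᶠ b in nhdsWithin (2:ℝ) (Set.Iio 2), 0 < b :=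
      nhdsWithin_le_nhds (lt_mem_nhds zero_lt_two)
    obtain ⟨b, ⟨hb1, hb2⟩, hb3⟩ := ((h1.and h2).and self_mem_nhdsWithin).exists
    have hb3' : b < 2 := hb3
    exact ⟨b, hb2, hb3', by linarith, hb1⟩

/-- Some step `b / n` is admissible at every point of `[0, b]`: the gap is smallest and the
denominator largest at `b`. -/
lemma exists_step {γ ν b : ℝ} (hν : ν ∈ Set.Ioo (0:ℝ) (1/2)) (hγ : 0 < γ)
    (hγν : ν^2 / (1 - 2*ν) < γ) (hb : 0 < b) (hba : b < aPar γ ν) :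
    ∃ n : ℕ, 0 < n ∧ ∀ α, 0 ≤ α → α ≤ b → α + b / n < pfun γ ν α := by
  have hg := gap_pos hν hγ hγν hb.le hba
  have hd := den_pos hν hγ hb.le
  obtain ⟨n, hn⟩ := exists_nat_gt (b * den γ ν b / gap γ ν b)
  have hn0 : (0:ℝ) < n := lt_trans (by positivity) hn
  refine ⟨n, by exact_mod_cast hn0, fun α hα hαb => lt_pfun_of_mul_den_lt_gap hν hγ hα ?_⟩
  have h0 := hν.1
  have hden : den γ ν α ≤ den γ ν b := by
    unfold den
    gcongr
  have hgap : gap γ ν b ≤ gap γ ν α := by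
    unfold gap
    gcongr
  calc b / n * den γ ν α ≤ b / n * den γ ν b := by gcongr
    _ < gap γ ν b := by
      rw [div_lt_iff₀ hg] at hn
      rw [div_mul_eq_mul_div, div_lt_iff₀ hn0]
      linarith
    _ ≤ gap γ ν α := hgap

/-- Let ν ∈ (0, 1/2) and γ ∈ (0, 1) with γ > ν²/(1 − 2ν), and let q ∈ (0, q_{γ,ν}).
Then there exist n₀ ≥ 1 and reals 0 = α₀ < α₁ < … < α_{n₀} such that α_k ∈ [0, 2) and
α_{k+1} < p(α_k) for every k ∈ {0, …, n₀ − 1}, and α_{n₀} ≥ q. -/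
theorem stmt17 (γ ν q : ℝ) (hν : ν ∈ Set.Ioo (0:ℝ) (1/2)) (hγ : γ ∈ Set.Ioo (0:ℝ) 1)
    (hγν : ν^2 / (1 - 2*ν) < γ) (hq : q ∈ Set.Ioo 0 (qPar γ ν)) :
    ∃ (n₀ : ℕ) (α : ℕ → ℝ), 1 ≤ n₀ ∧ α 0 = 0 ∧
      (∀ k < n₀, α k < α (k + 1)) ∧
      (∀ k < n₀, α k ∈ Set.Ico (0:ℝ) 2) ∧
      (∀ k < n₀, α (k + 1) < pfun γ ν (α k)) ∧
      q ≤ α n₀ := by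
  obtain ⟨b, hb0, hb2, hba, hqb⟩ := exists_endpoint hν hγ.1 hγν hq
  obtain ⟨n, hn, hstep⟩ := exists_step hν hγ.1 hγν hb0 hba
  have hn' : (0:ℝ) < n := by exact_mod_cast hn
  have hδ : 0 < b / n := by positivity
  have hbp : b < pfun γ ν b := by linarith [hstep b hb0.le le_rfl]
  obtain ⟨c, hc1, hc2⟩ := exists_between (max_lt hbp hqb)
  have hnb : (n:ℝ) * (b / n) = b := by field_simp
  have hle : ∀ k : ℕ, k ≤ n → (k:ℝ) * (b / n) ≤ b := fun k hk => by
    calc (k:ℝ) * (b / n) ≤ n * (b / n) := by gcongr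
      _ = b := hnb
  refine ⟨n + 1, fun k => if k ≤ n then (k:ℝ) * (b / n) else c, by omega, by simp, ?_, ?_, ?_, ?_⟩
  · intro k hk
    rcases Nat.lt_succ_iff_lt_or_eq.mp hk with h | rfl
    · simp only [h.le, Nat.succ_le_of_lt h, if_true]
      push_cast
      linarith
    · simp only [le_refl, if_true, Nat.not_succ_le_self, if_false, hnb]
      exact (le_max_left _ _).trans_lt hc1
  · intro k hk
    have hk' : k ≤ n := Nat.lt_succ_iff.mp hk
    simp only [hk', if_true]
    exact ⟨by positivity, (hle k hk').trans_lt hb2⟩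
  · intro k hk
    rcases Nat.lt_succ_iff_lt_or_eq.mp hk with h | rfl
    · simp only [h.le, Nat.succ_le_of_lt h, if_true]
      have := hstep (k * (b / n)) (by positivity) (hle k h.le)
      push_cast
      linarith
    · simp only [le_refl, if_true, Nat.not_succ_le_self, if_false, hnb]
      exact hc2
  · simp only [Nat.not_succ_le_self, if_false]
    exact ((le_max_right _ _).trans_lt hc1).le
end
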